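/- Let α, β, γ ∈ ℂ with none of α, β, γ a nonpositive integer, let δ, w ∈ ℂ, and let k ∈ (0,1). Define f_{m,n} as in the context, with the conventions f_{−1,ℓ} := 0 and f_{m,n} := 0 for m > n. Then for every n ≥ 1 and every m with 0 ≤ m ≤ n+1: −( f_{m,n}/k² − f_{m,n−1} ) + ( (n+α)(n+β) / (n(n+γ−1)) )·( f_{m,n+1}/k² − f_{m,n} ) = −( (w − (1−k²)δ·n) / (k²·n·(γ+n−1)) )·f_{m−1,n}. -/

import Mathlib

/-- The Pochhammer symbol `(x)_n = x(x+1)⋯(x+n-1)`. -/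
noncomputable def poch (x : ℂ) (n : ℕ) : ℂ := ∏ i ∈ Finset.range n, (x + (i : ℂ))

/-- The index set of tuples `(ℓ_1, j_1, …, ℓ_m, j_m)` with
`0 ≤ ℓ_1 ≤ j_1 < ℓ_2 ≤ j_2 < ⋯ < ℓ_m ≤ j_m < n`, encoded as pairs of functions
`(ℓ, j) : (Fin m → Fin n) × (Fin m → Fin n)`. -/
def heunIdx (m n : ℕ) : Finset ((Fin m → Fin n) × (Fin m → Fin n)) :=
  Finset.univ.filter fun p =>
    (∀ s : Fin m, (p.1 s : ℕ) ≤ (p.2 s : ℕ)) ∧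
    (∀ s t : Fin m, (s : ℕ) + 1 = (t : ℕ) → (p.2 s : ℕ) < (p.1 t : ℕ))

/-- The coefficients `f_{m,n}`: `f_{0,n} = k^{2n}`; for `1 ≤ m ≤ n`,
`f_{m,n} = (-1)^m k^{2n-2m} Σ ∏_{s=1}^m [j_s!(γ)_{j_s}(α)_{ℓ_s}(β)_{ℓ_s} /
(ℓ_s!(γ)_{ℓ_s}(α)_{j_s+1}(β)_{j_s+1})] k^{-2(j_s-ℓ_s)} (w - (1-k²)δℓ_s)`,
the sum running over `heunIdx m n`; and `f_{m,n} = 0` for `m < 0` or `m > n`. -/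
noncomputable def heunf (k : ℝ) (α β γ δ w : ℂ) (m : ℤ) (n : ℕ) : ℂ :=
  if m = 0 then (k : ℂ) ^ (2 * n)
  else if m < 0 ∨ (n : ℤ) < m then 0
  else (-1 : ℂ) ^ m.toNat * (k : ℂ) ^ (2 * (n : ℤ) - 2 * m) *
    ∑ p ∈ heunIdx m.toNat n, ∏ s : Fin m.toNat,
      ((Nat.factorial (p.2 s : ℕ) : ℂ) * poch γ (p.2 s : ℕ) * poch α (p.1 s : ℕ) *
          poch β (p.1 s : ℕ)) /
        ((Nat.factorial (p.1 s : ℕ) : ℂ) * poch γ (p.1 s : ℕ) * poch α ((p.2 s : ℕ) + 1) *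
          poch β ((p.2 s : ℕ) + 1)) *
      (k : ℂ) ^ (-(2 : ℤ) * (((p.2 s : ℕ) : ℤ) - ((p.1 s : ℕ) : ℤ))) *
      (w - (1 - (k : ℂ) ^ 2) * δ * ((p.1 s : ℕ) : ℂ))

/-- The Taylor coefficients `c_n = ((α)_n (β)_n / (n! (γ)_n)) Σ_{m=0}^n f_{m,n}`
of the local Heun solution. -/
noncomputable def heunc (k : ℝ) (α β γ δ w : ℂ) (n : ℕ) : ℂ :=
  poch α n * poch β n / ((Nat.factorial n : ℂ) * poch γ n) *
    ∑ m ∈ Finset.range (n + 1), heunf k α β γ δ w (m : ℤ) n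

/-- Natural-number version of `heunIdx`. -/
def natIdx (m n : ℕ) : Finset ((Fin m → ℕ) × (Fin m → ℕ)) :=
  (heunIdx m n).image fun p => (fun s => (p.1 s : ℕ), fun s => (p.2 s : ℕ))

theorem mem_natIdx {m n : ℕ} (q : (Fin m → ℕ) × (Fin m → ℕ)) :
    q ∈ natIdx m n ↔ (∀ s, q.1 s ≤ q.2 s) ∧
      (∀ s t : Fin m, (s : ℕ) + 1 = (t : ℕ) → q.2 s < q.1 t) ∧ ∀ s, q.2 s < n := by
  unfold natIdx heunIdx
  simp only [Finset.mem_image, Finset.mem_filter, Finset.mem_univ, true_and]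
  constructor
  · rintro ⟨p, ⟨h1, h2⟩, rfl⟩
    exact ⟨h1, h2, fun s => (p.2 s).2⟩
  · rintro ⟨h1, h2, h3⟩
    exact ⟨(fun s => ⟨q.1 s, (h1 s).trans_lt (h3 s)⟩, fun s => ⟨q.2 s, h3 s⟩), ⟨h1, h2⟩, rfl⟩

/-- Sum over tuples of a product weight. -/
noncomputable def wsum (g : ℕ → ℕ → ℂ) (m n : ℕ) : ℂ :=
  ∑ q ∈ natIdx m n, ∏ s : Fin m, g (q.1 s) (q.2 s)

theorem wsum_eq (g : ℕ → ℕ → ℂ) (m n : ℕ) :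
    wsum g m n = ∑ p ∈ heunIdx m n, ∏ s : Fin m, g (p.1 s : ℕ) (p.2 s : ℕ) := by
  unfold wsum natIdx
  rw [Finset.sum_image]
  rintro ⟨a, b⟩ _ ⟨c, d⟩ _ h
  simp only [Prod.mk.injEq] at h
  ext s
  · exact congrFun h.1 s
  · exact congrFun h.2 s

theorem chain_lt {m n : ℕ} {q : (Fin m → ℕ) × (Fin m → ℕ)} (hq : q ∈ natIdx m n) :
    ∀ (b : ℕ) (hb : b < m) (a : ℕ) (hab : a < b),
      q.2 ⟨a, hab.trans hb⟩ < q.1 ⟨b, hb⟩ := by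
  rw [mem_natIdx] at hq
  obtain ⟨h1, h2, -⟩ := hq
  intro b
  induction b with
  | zero => intro _ a h; omega
  | succ b ih =>
    intro hb a hab
    have h3 := h2 ⟨b, by omega⟩ ⟨b + 1, hb⟩ rfl
    rcases Nat.lt_succ_iff_lt_or_eq.1 hab with h | rfl
    · exact ((ih (by omega) a h).trans_le (h1 _)).trans h3
    · exact h3

theorem wsum_succ (g : ℕ → ℕ → ℂ) (m n : ℕ) :
    wsum g (m + 1) n = ∑ j ∈ Finset.range n, ∑ l ∈ Finset.range (j + 1), g l j * wsum g m l := by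
  unfold wsum
  simp only [Finset.mul_sum]
  simp only [Finset.sum_sigma']
  symm
  refine Finset.sum_bij'
    (fun x _ => ((Fin.snoc x.2.2.1 x.2.1 : Fin (m + 1) → ℕ), (Fin.snoc x.2.2.2 x.1 : Fin (m + 1) → ℕ)))
    (fun q _ => ⟨q.2 (Fin.last m), q.1 (Fin.last m),
      (fun s => q.1 s.castSucc, fun s => q.2 s.castSucc)⟩) ?_ ?_ ?_ ?_ ?_
  · rintro ⟨j, l, p⟩ hx
    simp only [Finset.mem_sigma, Finset.mem_range, mem_natIdx] at hx
    obtain ⟨hj, hl, h1, h2, h3⟩ := hx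
    rw [mem_natIdx]
    refine ⟨?_, ?_, ?_⟩
    · intro s
      refine Fin.lastCases ?_ (fun i => ?_) s
      · simp only [Fin.snoc_last]; omega
      · simpa only [Fin.snoc_castSucc] using h1 i
    · intro s t
      refine Fin.lastCases ?_ (fun i => ?_) s
      · intro h; have := t.2; simp at h; omega
      · refine Fin.lastCases ?_ (fun i' => ?_) t
        · intro _
          simpa only [Fin.snoc_castSucc, Fin.snoc_last] using h3 i
        · intro h
          simpa only [Fin.snoc_castSucc] using h2 i i' (by simpa using h)
    · intro s
      refine Fin.lastCases ?_ (fun i => ?_) s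
      · simpa only [Fin.snoc_last] using hj
      · simp only [Fin.snoc_castSucc]
        have := h3 i
        omega
  · intro q hq
    have hc := chain_lt hq
    rw [mem_natIdx] at hq
    obtain ⟨h1, h2, h3⟩ := hq
    simp only [Finset.mem_sigma, Finset.mem_range, mem_natIdx]
    refine ⟨h3 _, Nat.lt_succ_of_le (h1 _), fun s => h1 _, fun s t h => h2 _ _ (by simpa using h),
      fun s => hc m (by omega) s s.2⟩
  · rintro ⟨j, l, p⟩ hx
    simp
  · rintro ⟨a, b⟩ hq
    ext s <;> refine Fin.lastCases ?_ (fun i => ?_) s <;> simp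
  · rintro ⟨j, l, p⟩ hx
    simp only [Fin.prod_univ_castSucc, Fin.snoc_castSucc, Fin.snoc_last]
    ring

theorem wsum_zero (g : ℕ → ℕ → ℂ) (n : ℕ) : wsum g 0 n = 1 := by
  have : natIdx 0 n = {(Fin.elim0, Fin.elim0)} := by
    ext ⟨a, b⟩
    simp [mem_natIdx, eq_iff_true_of_subsingleton]
  simp [wsum, this]

theorem wsum_big (g : ℕ → ℕ → ℂ) (m : ℕ) : ∀ n, n < m → wsum g m n = 0 := by
  induction m with
  | zero => intro n h; omega
  | succ m ih =>
    intro n h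
    rw [wsum_succ]
    refine Finset.sum_eq_zero fun j hj => Finset.sum_eq_zero fun l hl => ?_
    simp only [Finset.mem_range] at hj hl
    rw [ih l (by omega), mul_zero]

/-- The weight. -/
noncomputable def hw (k : ℝ) (α β γ δ w : ℂ) (l j : ℕ) : ℂ :=
  ((Nat.factorial j : ℂ) * poch γ j * poch α l * poch β l) /
        ((Nat.factorial l : ℂ) * poch γ l * poch α (j + 1) * poch β (j + 1)) *
      (k : ℂ) ^ (-(2 : ℤ) * ((j : ℤ) - (l : ℤ))) *
      (w - (1 - (k : ℂ) ^ 2) * δ * (l : ℂ))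

theorem heunf_eq (k : ℝ) (α β γ δ w : ℂ) (m n : ℕ) :
    heunf k α β γ δ w (m : ℤ) n =
      (-1 : ℂ) ^ m * (k : ℂ) ^ (2 * (n : ℤ) - 2 * m) * wsum (hw k α β γ δ w) m n := by
  unfold heunf
  split_ifs with h1 h2
  · have : m = 0 := by exact_mod_cast h1
    subst this
    rw [wsum_zero]
    simp only [pow_zero, one_mul, mul_one, Nat.cast_zero, mul_zero, sub_zero]
    exact_mod_cast rfl
  · rw [wsum_big _ _ _ (by omega), mul_zero]
  · rw [wsum_eq]
    rfl

theorem poch_succ (x : ℂ) (n : ℕ) : poch x (n + 1) = poch x n * (x + n) := by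
  simp [poch, Finset.prod_range_succ]

theorem add_ne (x : ℂ) (hx : ∀ j : ℕ, x ≠ -(j : ℂ)) (j : ℕ) : x + j ≠ 0 := by
  intro h
  exact hx j (eq_neg_of_add_eq_zero_left h)

theorem poch_ne (x : ℂ) (hx : ∀ j : ℕ, x ≠ -(j : ℂ)) (n : ℕ) : poch x n ≠ 0 :=
  Finset.prod_ne_zero_iff.2 fun i _ => add_ne x hx i

theorem hw_succ (k : ℝ) (hk0 : 0 < k) (α β γ δ w : ℂ)
    (hα : ∀ j : ℕ, α ≠ -(j : ℂ)) (hβ : ∀ j : ℕ, β ≠ -(j : ℂ)) (l j : ℕ) :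
    (k : ℂ) ^ 2 * ((α + (j + 1 : ℕ)) * (β + (j + 1 : ℕ))) * hw k α β γ δ w l (j + 1) =
      ((j + 1 : ℕ) : ℂ) * (γ + j) * hw k α β γ δ w l j := by
  have hk : (k : ℂ) ≠ 0 := by exact_mod_cast hk0.ne'
  have a1 := add_ne α hα (j + 1)
  have b1 := add_ne β hβ (j + 1)
  unfold hw
  have e : (k : ℂ) ^ (-(2 : ℤ) * ((j : ℤ) - (l : ℤ))) =
      (k : ℂ) ^ 2 * (k : ℂ) ^ (-(2 : ℤ) * (((j + 1 : ℕ) : ℤ) - (l : ℤ))) := by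
    rw [← zpow_natCast, ← zpow_add₀ hk]
    congr 1
    push_cast
    ring
  rw [e, poch_succ α (j + 1), poch_succ β (j + 1), poch_succ γ j, Nat.factorial_succ,
    Nat.cast_mul]
  generalize (k : ℂ) ^ (-(2 : ℤ) * (((j + 1 : ℕ) : ℤ) - (l : ℤ))) = z
  generalize α + ((j + 1 : ℕ) : ℂ) = A at *
  generalize β + ((j + 1 : ℕ) : ℂ) = B at *
  rw [div_eq_mul_inv, div_eq_mul_inv]
  simp only [mul_inv]
  have hA : A * A⁻¹ = 1 := mul_inv_cancel₀ a1
  have hB : B * B⁻¹ = 1 := mul_inv_cancel₀ b1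
  generalize A⁻¹ = A' at *
  generalize B⁻¹ = B' at *
  grind

theorem hw_diag (k : ℝ) (α β γ δ w : ℂ)
    (hα : ∀ j : ℕ, α ≠ -(j : ℂ)) (hβ : ∀ j : ℕ, β ≠ -(j : ℂ)) (hγ : ∀ j : ℕ, γ ≠ -(j : ℂ))
    (j : ℕ) :
    (α + j) * (β + j) * hw k α β γ δ w j j = w - (1 - (k : ℂ) ^ 2) * δ * (j : ℂ) := by
  have a1 := add_ne α hα j
  have b1 := add_ne β hβ j
  have a2 := poch_ne α hα j
  have b2 := poch_ne β hβ j
  have c2 := poch_ne γ hγ j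
  have d : (Nat.factorial j : ℂ) ≠ 0 := by exact_mod_cast Nat.factorial_ne_zero j
  unfold hw
  rw [poch_succ, poch_succ, sub_self, mul_zero, zpow_zero]
  field_simp

/-- The combined difference identity
`-(f_{m,n}/k² - f_{m,n-1}) + ((n+α)(n+β)/(n(n+γ-1)))(f_{m,n+1}/k² - f_{m,n})
= -((w - (1-k²)δn)/(k²n(γ+n-1))) f_{m-1,n}` for `n ≥ 1`, `0 ≤ m ≤ n+1`. -/
theorem heunf_combined_difference_identity (k : ℝ) (hk0 : 0 < k) (hk1 : k < 1)
    (α β γ δ w : ℂ)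
    (hα : ∀ j : ℕ, α ≠ -(j : ℂ)) (hβ : ∀ j : ℕ, β ≠ -(j : ℂ))
    (hγ : ∀ j : ℕ, γ ≠ -(j : ℂ)) :
    ∀ n : ℕ, 1 ≤ n → ∀ m : ℕ, m ≤ n + 1 →
      -(heunf k α β γ δ w (m : ℤ) n / (k : ℂ) ^ 2 - heunf k α β γ δ w (m : ℤ) (n - 1)) +
        ((n : ℂ) + α) * ((n : ℂ) + β) / ((n : ℂ) * ((n : ℂ) + γ - 1)) *
          (heunf k α β γ δ w (m : ℤ) (n + 1) / (k : ℂ) ^ 2 - heunf k α β γ δ w (m : ℤ) n) =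
      -((w - (1 - (k : ℂ) ^ 2) * δ * (n : ℂ)) /
          ((k : ℂ) ^ 2 * (n : ℂ) * (γ + (n : ℂ) - 1))) *
        heunf k α β γ δ w ((m : ℤ) - 1) n := by
  have hk : (k : ℂ) ≠ 0 := by exact_mod_cast hk0.ne'
  intro n hn m hm
  obtain ⟨n, rfl⟩ : ∃ r, n = r + 1 := ⟨n - 1, by omega⟩
  rw [Nat.add_sub_cancel]
  rcases m with _ | m
  · have h0 : ∀ r, heunf k α β γ δ w ((0 : ℕ) : ℤ) r = (k : ℂ) ^ (2 * r) := by
      intro r; simp [heunf]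
    have h1 : heunf k α β γ δ w (((0 : ℕ) : ℤ) - 1) (n + 1) = 0 := by
      simp [heunf]
    have h2 : ∀ r, (k : ℂ) ^ (2 * (r + 1)) / (k : ℂ) ^ 2 - (k : ℂ) ^ (2 * r) = 0 := by
      intro r
      rw [mul_add, pow_add]
      field_simp
      ring
    rw [h0, h0, h0, h1, h2, h2]
    ring
  · have e : (((m + 1 : ℕ) : ℤ) - 1) = (m : ℤ) := by push_cast; ring
    rw [e]
    set g := hw k α β γ δ w with hg
    set T : ℕ → ℂ := fun j => ∑ l ∈ Finset.range (j + 1), g l j * wsum g m l with hT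
    have hd : ∀ r : ℕ, heunf k α β γ δ w ((m + 1 : ℕ) : ℤ) (r + 1) / (k : ℂ) ^ 2 -
        heunf k α β γ δ w ((m + 1 : ℕ) : ℤ) r =
        (-1 : ℂ) ^ (m + 1) * (k : ℂ) ^ (2 * (r : ℤ) - 2 * ((m + 1 : ℕ) : ℤ)) * T r := by
      intro r
      rw [heunf_eq, heunf_eq, wsum_succ, wsum_succ, Finset.sum_range_succ]
      have : (k : ℂ) ^ (2 * ((r + 1 : ℕ) : ℤ) - 2 * ((m + 1 : ℕ) : ℤ)) =
          (k : ℂ) ^ (2 * (r : ℤ) - 2 * ((m + 1 : ℕ) : ℤ)) * (k : ℂ) ^ 2 := by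
        rw [← zpow_natCast, ← zpow_add₀ hk]
        congr 1
        push_cast
        ring
      rw [this]
      simp only [hT, hg]
      field_simp
      ring
    have hTs : (k : ℂ) ^ 2 * ((α + (n + 1 : ℕ)) * (β + (n + 1 : ℕ))) * T (n + 1) =
        ((n + 1 : ℕ) : ℂ) * (γ + n) * T n +
        (k : ℂ) ^ 2 * (w - (1 - (k : ℂ) ^ 2) * δ * ((n + 1 : ℕ) : ℂ)) * wsum g m (n + 1) := by
      simp only [hT]
      rw [Finset.sum_range_succ, mul_add, ← hw_diag k α β γ δ w hα hβ hγ (n + 1), Finset.mul_sum,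
        Finset.mul_sum]
      congr 1
      · refine Finset.sum_congr rfl fun l _ => ?_
        rw [← mul_assoc, hw_succ k hk0 α β γ δ w hα hβ, ← hg]
        ring
      · rw [← hg]; ring
    rw [hd, hd, heunf_eq, ← hg]
    have z1 : (k : ℂ) ^ (2 * ((n + 1 : ℕ) : ℤ) - 2 * ((m + 1 : ℕ) : ℤ)) =
        (k : ℂ) ^ (2 * (n : ℤ) - 2 * ((m + 1 : ℕ) : ℤ)) * (k : ℂ) ^ 2 := by
      rw [← zpow_natCast, ← zpow_add₀ hk]
      congr 1
      push_cast
      ring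
    have z2 : (k : ℂ) ^ (2 * ((n + 1 : ℕ) : ℤ) - 2 * (m : ℤ)) =
        (k : ℂ) ^ (2 * (n : ℤ) - 2 * ((m + 1 : ℕ) : ℤ)) * ((k : ℂ) ^ 2 * (k : ℂ) ^ 2) := by
      rw [← pow_add, ← zpow_natCast, ← zpow_add₀ hk]
      congr 1
      push_cast
      ring
    rw [z1, z2]
    have c1 := add_ne γ hγ n
    have n1 : ((n + 1 : ℕ) : ℂ) ≠ 0 := by exact_mod_cast Nat.succ_ne_zero n
    have r1 : ((n + 1 : ℕ) : ℂ) + γ - 1 = γ + n := by push_cast; ring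
    have r2 : γ + ((n + 1 : ℕ) : ℂ) - 1 = γ + n := by push_cast; ring
    rw [r1, r2]
    generalize (k : ℂ) ^ (2 * (n : ℤ) - 2 * ((m + 1 : ℕ) : ℤ)) = z
    generalize wsum g m (n + 1) = S at *
    generalize T (n + 1) = T1 at *
    generalize T n = T0 at *
    generalize ((n + 1 : ℕ) : ℂ) = N at *
    generalize γ + (n : ℂ) = c at *
    rw [pow_succ]
    field_simp
    linear_combination -z * hTs
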